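/- (Theorem 5.1, stated with q replaced by q^2 to avoid half-integer powers.) Let q, a be complex numbers with 0 < |q| < 1 and a q^{2m} ≠ 1 for all m ≥ 1, and let k ≥ 2 and 1 ≤ i ≤ k be integers. Then the following three expressions are equal: (1) ∑_{n=0}^{∞} (-1)^n a^{kn} q^{2kn^2 + (2k-2i+1)n} · [(-q;q^2)_n (-a q^{2n+3}; q^2)_∞ / ((q^2;q^2)_n (a q^{2n+2}; q^2)_∞)] · (1 + a q^{2n+1} - (1 + q^{2n+1}) a^i q^{(2i-1)(2n+1)}); (2) ∑_{s_1 ≥ ⋯ ≥ s_{k-1} ≥ 0} a^{s_1 + ⋯ + s_{k-1}} (-q;q^2)_{s_1} · q^{s_1^2 + 2(s_2^2 + ⋯ + s_{k-1}^2) + 2(s_i + ⋯ + s_{k-1})} / [(q^2;q^2)_{s_1-s_2} (q^2;q^2)_{s_2-s_3} ⋯ (q^2;q^2)_{s_{k-1}}]; (3) ∑_{s_1 ≥ ⋯ ≥ s_{2k-2} ≥ 0} a^{s_1 + s_3 + ⋯ + s_{2k-3}} q^{s_1^2 + ⋯ + s_{2k-2}^2 + 2(s_{2i-1} + s_{2i+1}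 + ⋯ + s_{2k-3})} / [(q^2;q^2)_{s_1-s_2} (q^2;q^2)_{s_2-s_3} ⋯ (q^2;q^2)_{s_{2k-2}}], where in (2) the term 2(s_i + ⋯ + s_{k-1}) is empty when i = k, and in (3) the term 2(s_{2i-1} + s_{2i+1} + ⋯ + s_{2k-3}) is the sum over odd indices from 2i-1 to 2k-3, empty when i = k. -/

import Mathlib

/-- The finite q-Pochhammer symbol `(x;q)_n = ∏_{j=0}^{n-1} (1 - x q^j)`. -/
noncomputable def qPoch (x q : ℂ) (n : ℕ) : ℂ := ∏ j ∈ Finset.range n, (1 - x * q ^ j)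

/-- The infinite q-Pochhammer symbol `(x;q)_∞ = ∏_{j=0}^{∞} (1 - x q^j)`. -/
noncomputable def qPochInf (x q : ℂ) : ℂ := ∏' j : ℕ, (1 - x * q ^ j)

/-!
Put `Q = q²`. Summing (2) over all variables but the outermost amounts to iterating Bailey's lemma:
start from the unit Bailey pair relative to `aQ`, let the factors `(aQ)^s Q^{s²}` act on it from the
innermost variable outwards, lower the result to a Bailey pair relative to `a`, and let the
remaining factors `a^s Q^{s²}` act on that. The outermost variable carries `a^s (-q;Q)_s q^{s²}`,
whose conjugate sequence under the Bailey transform is evaluated by the `₁φ₁` summation; this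
gives (1). When `i = 1` no lowering takes place and the transform is applied with `aQ` for `a`.

The even-numbered variables of (3) are eliminated from the innermost outwards, which turns (3)
into (2), by the identity
`∑_s q^{s²} / (Q;Q)_{N-s} ∑_t v_t (-q;Q)_t β_t / (Q;Q)_{s-t} =
  (-q;Q)_N ∑_t v_t q^{t²} β_t / (Q;Q)_{N-t}`,
which is Bailey's lemma relative to `0` with one parameter kept finite.
-/

open Filter Topology Finset

section QPochhammer

variable {x Q : ℂ}

lemma qPoch_zero (x Q : ℂ) : qPoch x Q 0 = 1 := prod_range_zero _

lemma qPoch_succ (x Q : ℂ) (n : ℕ) : qPoch x Q (n + 1) = qPoch x Q n * (1 - x * Q ^ n) :=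
  prod_range_succ _ n

lemma qPoch_add (x Q : ℂ) (m n : ℕ) :
    qPoch x Q (m + n) = qPoch x Q m * qPoch (x * Q ^ m) Q n := by
  simp only [qPoch, prod_range_add, pow_add, mul_assoc]

lemma qPoch_one (x Q : ℂ) : qPoch x Q 1 = 1 - x := by simp [qPoch]

lemma qPoch_succ_left (x Q : ℂ) (n : ℕ) :
    qPoch x Q (n + 1) = (1 - x) * qPoch (x * Q) Q n := by
  rw [add_comm, qPoch_add, qPoch_one, pow_one]

lemma qPoch_zero_left (Q : ℂ) (n : ℕ) : qPoch 0 Q n = 1 := by simp [qPoch]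

lemma qPoch_mul_pow_ne_zero (hx : ∀ n, qPoch x Q n ≠ 0) (m n : ℕ) :
    qPoch (x * Q ^ m) Q n ≠ 0 :=
  right_ne_zero_of_mul (qPoch_add x Q m n ▸ hx (m + n))

lemma one_sub_mul_pow_ne_zero (hx : ∀ n, qPoch x Q n ≠ 0) (j : ℕ) : 1 - x * Q ^ j ≠ 0 :=
  right_ne_zero_of_mul (qPoch_succ x Q j ▸ hx (j + 1))

lemma qPoch_self_ne_zero (hQ : ‖Q‖ < 1) (n : ℕ) : qPoch Q Q n ≠ 0 := by
  refine prod_ne_zero_iff.2 fun j _ h => ?_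
  have hlt : ‖Q ^ (j + 1)‖ < 1 := by
    rw [norm_pow]
    exact pow_lt_one₀ (norm_nonneg _) hQ j.succ_ne_zero
  rw [pow_succ', ← sub_eq_zero.1 h, norm_one] at hlt
  exact lt_irrefl _ hlt

lemma summable_norm_neg_mul_pow (hQ : ‖Q‖ < 1) (x : ℂ) :
    Summable fun j : ℕ => ‖-(x * Q ^ j)‖ := by
  simp only [norm_neg, norm_mul, norm_pow]
  exact (summable_geometric_of_lt_one (norm_nonneg _) hQ).mul_left _

lemma tendsto_qPoch (hQ : ‖Q‖ < 1) (x : ℂ) :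
    Tendsto (fun n => qPoch x Q n) atTop (𝓝 (qPochInf x Q)) := by
  simpa only [qPoch, qPochInf, sub_eq_add_neg] using
    (multipliable_one_add_of_summable (summable_norm_neg_mul_pow hQ x)).hasProd.tendsto_prod_nat

lemma qPochInf_ne_zero (hQ : ‖Q‖ < 1) (hx : ∀ n, qPoch x Q n ≠ 0) : qPochInf x Q ≠ 0 := by
  have := tprod_one_add_ne_zero_of_summable (f := fun j : ℕ => -(x * Q ^ j))
    (fun j => by simpa only [← sub_eq_add_neg] using one_sub_mul_pow_ne_zero hx j)
    (summable_norm_neg_mul_pow hQ x)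
  simpa only [qPochInf, sub_eq_add_neg] using this

lemma qPochInf_eq_qPoch_mul (hQ : ‖Q‖ < 1) (x : ℂ) (n : ℕ) :
    qPochInf x Q = qPoch x Q n * qPochInf (x * Q ^ n) Q := by
  refine tendsto_nhds_unique ((tendsto_qPoch hQ x).comp (tendsto_add_atTop_nat n))
    (((tendsto_qPoch hQ (x * Q ^ n)).const_mul (qPoch x Q n)).congr fun m => ?_)
  rw [Function.comp_apply, add_comm m n, qPoch_add]

lemma exists_norm_le_of_tendsto {u : ℕ → ℂ} {l : ℂ} (h : Tendsto u atTop (𝓝 l)) :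
    ∃ C, ∀ n, ‖u n‖ ≤ C := by
  obtain ⟨C, hC⟩ := (Metric.isBounded_range_of_tendsto u h).exists_norm_le
  exact ⟨C, fun n => hC _ ⟨n, rfl⟩⟩

lemma exists_norm_qPoch_le (hQ : ‖Q‖ < 1) (x : ℂ) : ∃ C, ∀ n, ‖qPoch x Q n‖ ≤ C :=
  exists_norm_le_of_tendsto (tendsto_qPoch hQ x)

lemma exists_norm_inv_qPoch_le (hQ : ‖Q‖ < 1) (hx : ∀ n, qPoch x Q n ≠ 0) :
    ∃ C, ∀ n, ‖(qPoch x Q n)⁻¹‖ ≤ C :=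
  exists_norm_le_of_tendsto ((tendsto_qPoch hQ x).inv₀ (qPochInf_ne_zero hQ hx))

end QPochhammer

section Kernel

variable {Q : ℂ}

/-- The kernel `1 / (Q;Q)_{n-r}` linking consecutive summation variables, extended by zero to
`n < r` (where truncated subtraction would give `1` instead). -/
noncomputable def qKernel (Q : ℂ) (n r : ℕ) : ℂ :=
  if r ≤ n then (qPoch Q Q (n - r))⁻¹ else 0

lemma qKernel_of_le {n r : ℕ} (h : r ≤ n) : qKernel Q n r = (qPoch Q Q (n - r))⁻¹ := if_pos h

lemma qKernel_of_lt {n r : ℕ} (h : n < r) : qKernel Q n r = 0 := if_neg h.not_ge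

lemma qKernel_add (r j : ℕ) : qKernel Q (r + j) r = (qPoch Q Q j)⁻¹ := by
  rw [qKernel_of_le (Nat.le_add_right r j), Nat.add_sub_cancel_left]

lemma qKernel_zero_right (n : ℕ) : qKernel Q n 0 = (qPoch Q Q n)⁻¹ := qKernel_of_le n.zero_le

lemma qKernel_add_add (n r j : ℕ) : qKernel Q (r + n) (r + j) = qKernel Q n j := by
  simp only [qKernel, Nat.add_le_add_iff_left, Nat.add_sub_add_left]

lemma qKernel_succ_succ (n r : ℕ) : qKernel Q (n + 1) (r + 1) = qKernel Q n r := by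
  simp only [qKernel, Nat.add_le_add_iff_right, Nat.add_sub_add_right]

lemma qKernel_succ_left (hQ : ∀ n, qPoch Q Q n ≠ 0) {n r : ℕ} (h : r ≤ n + 1) :
    (1 - Q ^ (n + 1 - r)) * qKernel Q (n + 1) r = qKernel Q n r := by
  obtain rfl | hlt := h.eq_or_lt
  · rw [Nat.sub_self, pow_zero, sub_self, zero_mul, qKernel_of_lt n.lt_succ_self]
  · obtain ⟨j, rfl⟩ := Nat.exists_eq_add_of_le (Nat.lt_succ_iff.1 hlt)
    have hj := hQ (j + 1)
    rw [add_assoc, qKernel_add, Nat.add_sub_cancel_left, qKernel_add, pow_succ']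
    rw [qPoch_succ] at hj ⊢
    have := right_ne_zero_of_mul hj
    field_simp

lemma qKernel_succ_right (hQ : ∀ n, qPoch Q Q n ≠ 0) {n r : ℕ} (h : r ≤ n) :
    qKernel Q n (r + 1) = (1 - Q ^ (n - r)) * qKernel Q n r := by
  rw [← qKernel_succ_left hQ (Nat.succ_le_succ h), Nat.succ_eq_add_one, Nat.add_sub_add_right,
    qKernel_succ_succ]

lemma exists_norm_qKernel_le (hQ : ‖Q‖ < 1) : ∃ C, ∀ n r, ‖qKernel Q n r‖ ≤ C := by
  obtain ⟨C, hC⟩ := exists_norm_inv_qPoch_le hQ (qPoch_self_ne_zero hQ)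
  refine ⟨C, fun n r => ?_⟩
  unfold qKernel
  split_ifs
  · exact hC _
  · simpa only [norm_zero] using (norm_nonneg _).trans (hC 0)

lemma one_sub_pow_mul_sum_qKernel (hQ : ∀ n, qPoch Q Q n ≠ 0) (f : ℕ → ℂ) (M : ℕ) :
    (1 - Q ^ (M + 1)) * ∑ j ∈ range (M + 2), qKernel Q (M + 1) j * f j =
      ∑ j ∈ range (M + 1), qKernel Q M j * f j +
        ∑ j ∈ range (M + 1), qKernel Q M j * (Q ^ (M - j) * ((1 - Q ^ (j + 1)) * f (j + 1))) := by
  have hsplit : ∀ j ∈ range (M + 2), (1 - Q ^ (M + 1)) * (qKernel Q (M + 1) j * f j) =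
      qKernel Q M j * f j + Q ^ (M + 1 - j) * (1 - Q ^ j) * (qKernel Q (M + 1) j * f j) := by
    intro j hj
    have hj : j ≤ M + 1 := by simpa [Nat.lt_succ_iff] using hj
    rw [← qKernel_succ_left hQ hj]
    linear_combination qKernel Q (M + 1) j * f j * pow_sub_mul_pow Q hj
  rw [mul_sum, sum_congr rfl hsplit, sum_add_distrib, sum_range_succ, sum_range_succ' _ (M + 1),
    qKernel_of_lt M.lt_succ_self]
  simp only [zero_mul, add_zero, pow_zero, sub_self, mul_zero]
  congr 1
  refine sum_congr rfl fun j _ => ?_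
  rw [qKernel_succ_succ, Nat.add_sub_add_right]
  ring

end Kernel

section Vandermonde

variable {Q c : ℂ}

/-- The numerator `(-1)^j Q^{C(j,2)} ∏_{l<j} (z - c Q^l)` of the `₁φ₁` series. It equals
`c^j Q^{j(j-1)} (z/c;Q)_j` when `c ≠ 0`, but also makes sense for `c = 0`. -/
noncomputable def phiNum (Q z c : ℂ) (j : ℕ) : ℂ :=
  (-1) ^ j * Q ^ j.choose 2 * ∏ l ∈ range j, (z - c * Q ^ l)

/-- The general term of the `₁φ₁` series `∑_j c^j Q^{j(j-1)} (z/c;Q)_j / ((Q;Q)_j (c;Q)_j)`. -/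
noncomputable def phiTerm (Q z c : ℂ) (j : ℕ) : ℂ :=
  phiNum Q z c j / (qPoch Q Q j * qPoch c Q j)

lemma succ_choose_two (j : ℕ) : (j + 1).choose 2 = j + j.choose 2 := by
  rw [Nat.choose_succ_succ' j 1, Nat.choose_one_right]

lemma sq_eq_two_mul_choose_add (j : ℕ) : j ^ 2 = 2 * j.choose 2 + j := by
  induction j with
  | zero => rfl
  | succ j ih =>
    rw [succ_choose_two]
    linear_combination ih

lemma phiNum_zero (Q z c : ℂ) : phiNum Q z c 0 = 1 := by simp [phiNum]

lemma phiNum_succ (Q z c : ℂ) (j : ℕ) :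
    phiNum Q z c (j + 1) = phiNum Q z c j * -(Q ^ j * (z - c * Q ^ j)) := by
  rw [phiNum, phiNum, prod_range_succ, succ_choose_two]
  ring

lemma phiNum_succ_left (Q z c : ℂ) (j : ℕ) :
    phiNum Q z c (j + 1) = -(z - c) * Q ^ j * phiNum Q z (c * Q) j := by
  simp only [phiNum, prod_range_succ', succ_choose_two, pow_zero, mul_one, mul_assoc, ← pow_succ']
  ring

lemma phiNum_add (Q z c : ℂ) (r j : ℕ) :
    phiNum Q z c (r + j) = phiNum Q z c r * phiNum Q (z * Q ^ r) (c * Q ^ (2 * r)) j := by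
  induction j with
  | zero => rw [add_zero, phiNum_zero, mul_one]
  | succ j ih =>
    rw [← add_assoc, phiNum_succ, phiNum_succ, ih]
    ring

lemma phiTerm_zero (Q z c : ℂ) : phiTerm Q z c 0 = 1 := by
  rw [phiTerm, phiNum_zero, qPoch_zero, qPoch_zero, mul_one, div_one]

lemma phiTerm_succ (hQ : ∀ n, qPoch Q Q n ≠ 0) (z c : ℂ) (j : ℕ) :
    (1 - Q ^ (j + 1)) * phiTerm Q z c (j + 1) =
      -(Q ^ j * ((z - c) / (1 - c))) * phiTerm Q z (c * Q) j := by
  have hj := one_sub_mul_pow_ne_zero hQ j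
  rw [phiTerm, phiTerm, phiNum_succ_left, qPoch_succ, qPoch_succ_left c, pow_succ']
  field_simp

/-- The `q`-Chu–Vandermonde summation, in a form polynomial in `z` that allows `c = 0`. -/
lemma sum_qKernel_mul_phiTerm (hQ : ∀ n, qPoch Q Q n ≠ 0) (hc : ∀ n, qPoch c Q n ≠ 0) (z : ℂ)
    (M : ℕ) :
    ∑ j ∈ range (M + 1), qKernel Q M j * phiTerm Q z c j =
      qPoch z Q M / (qPoch Q Q M * qPoch c Q M) := by
  induction M generalizing c with
  | zero => simp [qKernel_zero_right, phiTerm_zero, qPoch_zero]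
  | succ M ih =>
    have hcQ : ∀ n, qPoch (c * Q) Q n ≠ 0 := by simpa using qPoch_mul_pow_ne_zero hc 1
    have hstep : ∀ j ∈ range (M + 1),
        qKernel Q M j * (Q ^ (M - j) * ((1 - Q ^ (j + 1)) * phiTerm Q z c (j + 1))) =
          -(Q ^ M * ((z - c) / (1 - c))) * (qKernel Q M j * phiTerm Q z (c * Q) j) := by
      intro j hj
      rw [phiTerm_succ hQ, ← pow_sub_mul_pow Q (Nat.lt_succ_iff.1 (mem_range.1 hj))]
      ring
    have hM : 1 - Q ^ (M + 1) ≠ 0 := pow_succ' Q M ▸ one_sub_mul_pow_ne_zero hQ M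
    have h1c : 1 - c ≠ 0 := qPoch_one c Q ▸ hc 1
    have hshift : (1 - c) * qPoch (c * Q) Q M = qPoch c Q M * (1 - c * Q ^ M) := by
      rw [← qPoch_succ_left, qPoch_succ]
    have hcM : 1 - Q ^ M * c ≠ 0 := mul_comm c _ ▸ one_sub_mul_pow_ne_zero hc M
    apply mul_left_cancel₀ hM
    rw [one_sub_pow_mul_sum_qKernel hQ, sum_congr rfl hstep, ← mul_sum, ih hc, ih hcQ,
      qPoch_succ z, qPoch_succ Q, qPoch_succ c, ← pow_succ']
    have hQM := hQ M
    have hcM' := hc M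
    have := hcQ M
    rw [eq_div_of_mul_eq h1c ((mul_comm _ _).trans hshift)]
    field_simp
    ring

lemma summable_pow_mul_pow_choose {ρ R : ℝ} (h0 : 0 ≤ ρ) (h1 : ρ < 1) (hR : 0 ≤ R) :
    Summable fun j : ℕ => R ^ j * ρ ^ j.choose 2 := by
  have hlim : Tendsto (fun j : ℕ => R * ρ ^ j) atTop (𝓝 0) := by
    simpa using (tendsto_pow_atTop_nhds_zero_of_lt_one h0 h1).const_mul R
  refine summable_of_ratio_norm_eventually_le (r := 1 / 2) (by norm_num) ?_
  filter_upwards [hlim.eventually_le_const (show (0 : ℝ) < 1 / 2 by norm_num)] with j hj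
  rw [succ_choose_two, show R ^ (j + 1) * ρ ^ (j + j.choose 2) =
    R * ρ ^ j * (R ^ j * ρ ^ j.choose 2) by ring, norm_mul, Real.norm_of_nonneg (by positivity)]
  gcongr

lemma norm_phiNum_le (hQ : ‖Q‖ ≤ 1) (z c : ℂ) (j : ℕ) :
    ‖phiNum Q z c j‖ ≤ (‖z‖ + ‖c‖) ^ j * ‖Q‖ ^ j.choose 2 := by
  have hfactor (l : ℕ) : ‖z - c * Q ^ l‖ ≤ ‖z‖ + ‖c‖ := by
    refine (norm_sub_le _ _).trans (add_le_add_right ?_ _)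
    rw [norm_mul, norm_pow]
    exact mul_le_of_le_one_right (norm_nonneg _) (pow_le_one₀ (norm_nonneg _) hQ)
  have hprod : ‖∏ l ∈ range j, (z - c * Q ^ l)‖ ≤ (‖z‖ + ‖c‖) ^ j := by
    rw [norm_prod]
    exact (prod_le_prod (fun _ _ => norm_nonneg _) fun l _ => hfactor l).trans_eq
      (by rw [prod_const, card_range])
  rw [phiNum, norm_mul, norm_mul, norm_pow, norm_neg, norm_one, one_pow, one_mul, norm_pow,
    mul_comm]
  gcongr

lemma exists_norm_phiTerm_le (hQ : ‖Q‖ < 1) (hc : ∀ n, qPoch c Q n ≠ 0) (z : ℂ) :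
    ∃ C, ∀ j, ‖phiTerm Q z c j‖ ≤ C * ((‖z‖ + ‖c‖) ^ j * ‖Q‖ ^ j.choose 2) := by
  obtain ⟨A, hA⟩ := exists_norm_inv_qPoch_le hQ (qPoch_self_ne_zero hQ)
  obtain ⟨B, hB⟩ := exists_norm_inv_qPoch_le hQ hc
  have hA0 : 0 ≤ A := (norm_nonneg _).trans (hA 0)
  have hB0 : 0 ≤ B := (norm_nonneg _).trans (hB 0)
  refine ⟨A * B, fun j => ?_⟩
  rw [phiTerm, div_eq_mul_inv, mul_inv, norm_mul, norm_mul, mul_comm]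
  gcongr
  exacts [hA j, hB j, norm_phiNum_le hQ.le z c j]

lemma tendsto_qPoch_mul_qKernel (hQ : ‖Q‖ < 1) (j : ℕ) :
    Tendsto (fun M => qPoch Q Q M * qKernel Q M j) atTop (𝓝 1) := by
  have hne := qPochInf_ne_zero hQ (qPoch_self_ne_zero hQ)
  have hlim := (tendsto_qPoch hQ Q).mul
    (((tendsto_qPoch hQ Q).inv₀ hne).comp (tendsto_sub_atTop_nat j))
  rw [mul_inv_cancel₀ hne] at hlim
  refine hlim.congr' ?_
  filter_upwards [eventually_ge_atTop j] with M hM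
  rw [qKernel_of_le hM, Function.comp_apply]

/-- The `₁φ₁` summation, as the limit `M → ∞` of the `q`-Chu–Vandermonde summation. -/
lemma hasSum_phiTerm (hQ : ‖Q‖ < 1) (hc : ∀ n, qPoch c Q n ≠ 0) (z : ℂ) :
    HasSum (phiTerm Q z c) (qPochInf z Q / qPochInf c Q) := by
  have hQ' := qPoch_self_ne_zero hQ
  obtain ⟨A, hA⟩ := exists_norm_phiTerm_le hQ hc z
  obtain ⟨B, hB⟩ := exists_norm_qPoch_le hQ Q
  obtain ⟨C, hC⟩ := exists_norm_qKernel_le hQ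
  have hB0 : 0 ≤ B := (norm_nonneg _).trans (hB 0)
  have hC0 : 0 ≤ C := (norm_nonneg _).trans (hC 0 0)
  have hbound := (summable_pow_mul_pow_choose (norm_nonneg Q) hQ
    (by positivity : 0 ≤ ‖z‖ + ‖c‖)).mul_left A
  have hdom : Tendsto (fun M => ∑' j, qPoch Q Q M * qKernel Q M j * phiTerm Q z c j) atTop
      (𝓝 (∑' j, phiTerm Q z c j)) := by
    refine tendsto_tsum_of_dominated_convergence (hbound.mul_left (B * C))
      (fun j => ?_) (Eventually.of_forall fun M j => ?_)
    · simpa only [one_mul] using (tendsto_qPoch_mul_qKernel hQ j).mul_const (phiTerm Q z c j)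
    · rw [norm_mul, norm_mul]
      gcongr
      exacts [hB M, hC M j, hA j]
  have hpartial (M : ℕ) : ∑' j, qPoch Q Q M * qKernel Q M j * phiTerm Q z c j =
      qPoch z Q M / qPoch c Q M := by
    rw [tsum_eq_sum (s := range (M + 1)) fun j hj => by
      rw [qKernel_of_lt (by simpa using hj), mul_zero, zero_mul]]
    simp only [mul_assoc]
    rw [← mul_sum, sum_qKernel_mul_phiTerm hQ' hc, mul_div_assoc',
      mul_div_mul_left _ _ (hQ' M)]
  have hlim := (tendsto_qPoch hQ z).div (tendsto_qPoch hQ c) (qPochInf_ne_zero hQ hc)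
  simp only [hpartial] at hdom
  rw [← tendsto_nhds_unique hdom hlim]
  exact (Summable.of_norm_bounded hbound hA).hasSum

end Vandermonde

section Bailey

variable {a b Q : ℂ} {α β : ℕ → ℂ}

/-- The Bailey kernel `1 / ((Q;Q)_{n-r} (aQ;Q)_{n+r})`, extended by zero to `n < r`. -/
noncomputable def baileyKernel (a Q : ℂ) (n r : ℕ) : ℂ :=
  qKernel Q n r / qPoch (a * Q) Q (n + r)

/-- `(α, β)` is a Bailey pair relative to `a` with base `Q`. -/
def IsBaileyPair (a Q : ℂ) (α β : ℕ → ℂ) : Prop :=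
  ∀ n, β n = ∑ r ∈ range (n + 1), α r * baileyKernel a Q n r

/-- One link `N ↦ ∑_{s ≤ N} w_s β_s / (Q;Q)_{N-s}` of a multisum over decreasing tuples. -/
noncomputable def baileyStep (Q : ℂ) (w β : ℕ → ℂ) (N : ℕ) : ℂ :=
  ∑ s ∈ range (N + 1), qKernel Q N s * (w s * β s)

lemma baileyKernel_of_lt {n r : ℕ} (h : n < r) : baileyKernel a Q n r = 0 := by
  rw [baileyKernel, qKernel_of_lt h, zero_div]

lemma phiNum_mul_baileyKernel_add (a z Q : ℂ) (r j : ℕ) :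
    phiNum Q z (a * Q) (r + j) * baileyKernel a Q (r + j) r =
      phiNum Q z (a * Q) r / qPoch (a * Q) Q (2 * r) *
        phiTerm Q (z * Q ^ r) (a * Q * Q ^ (2 * r)) j := by
  rw [phiNum_add, baileyKernel, qKernel_add, phiTerm, show r + j + r = 2 * r + j by ring, qPoch_add]
  simp only [div_eq_mul_inv, mul_inv]
  ring

lemma sum_qKernel_mul_phiNum_mul_baileyKernel (hQ : ∀ n, qPoch Q Q n ≠ 0)
    (ha : ∀ n, qPoch (a * Q) Q n ≠ 0) (z : ℂ) {N r : ℕ} (h : r ≤ N) :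
    ∑ s ∈ range (N + 1), qKernel Q N s * (phiNum Q z (a * Q) s * baileyKernel a Q s r) =
      phiNum Q z (a * Q) r * qPoch (z * Q ^ r) Q (N - r) * baileyKernel a Q N r := by
  obtain ⟨M, rfl⟩ := Nat.exists_eq_add_of_le h
  have hzero : ∑ s ∈ range r, qKernel Q (r + M) s *
      (phiNum Q z (a * Q) s * baileyKernel a Q s r) = 0 :=
    sum_eq_zero fun s hs => by rw [baileyKernel_of_lt (mem_range.1 hs), mul_zero, mul_zero]
  rw [add_assoc, sum_range_add, hzero, zero_add]
  simp only [phiNum_mul_baileyKernel_add, qKernel_add_add, mul_left_comm (qKernel Q M _)]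
  rw [← mul_sum, sum_qKernel_mul_phiTerm hQ (qPoch_mul_pow_ne_zero ha _), baileyKernel,
    qKernel_add, show r + M + r = 2 * r + M by ring, qPoch_add, Nat.add_sub_cancel_left]
  simp only [div_eq_mul_inv, mul_inv]
  ring

lemma hasSum_phiNum_mul_baileyKernel (hQ : ‖Q‖ < 1) (ha : ∀ n, qPoch (a * Q) Q n ≠ 0) (z : ℂ)
    (r : ℕ) :
    HasSum (fun s => phiNum Q z (a * Q) s * baileyKernel a Q s r)
      (phiNum Q z (a * Q) r * (qPochInf (z * Q ^ r) Q / qPochInf (a * Q) Q)) := by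
  rw [← (add_right_injective r).hasSum_iff]
  · simp only [Function.comp_def, phiNum_mul_baileyKernel_add]
    rw [qPochInf_eq_qPoch_mul hQ (a * Q) (2 * r), ← div_div, div_right_comm, mul_div_assoc',
      ← div_mul_eq_mul_div]
    exact (hasSum_phiTerm hQ (qPoch_mul_pow_ne_zero ha _) _).mul_left _
  · intro s hs
    have : s < r := by
      by_contra! h
      exact hs ⟨s - r, Nat.add_sub_cancel' h⟩
    rw [baileyKernel_of_lt this, mul_zero]

lemma IsBaileyPair.eq_sum_of_le (h : IsBaileyPair a Q α β) {n N : ℕ} (hn : n ≤ N) :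
    β n = ∑ r ∈ range (N + 1), α r * baileyKernel a Q n r := by
  rw [h n]
  refine sum_subset (range_subset_range.2 (Nat.succ_le_succ hn)) fun r _ hr => ?_
  rw [baileyKernel_of_lt (by simpa using hr), mul_zero]

lemma IsBaileyPair.baileyStep_phiNum (h : IsBaileyPair a Q α β) (hQ : ∀ n, qPoch Q Q n ≠ 0)
    (ha : ∀ n, qPoch (a * Q) Q n ≠ 0) (z : ℂ) (N : ℕ) :
    baileyStep Q (phiNum Q z (a * Q)) β N = ∑ r ∈ range (N + 1),
      phiNum Q z (a * Q) r * qPoch (z * Q ^ r) Q (N - r) * α r * baileyKernel a Q N r := by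
  have hterm : ∀ s ∈ range (N + 1), qKernel Q N s * (phiNum Q z (a * Q) s * β s) =
      ∑ r ∈ range (N + 1),
        α r * (qKernel Q N s * (phiNum Q z (a * Q) s * baileyKernel a Q s r)) := by
    intro s hs
    rw [h.eq_sum_of_le (Nat.lt_succ_iff.1 (mem_range.1 hs)), mul_sum, mul_sum]
    exact sum_congr rfl fun r _ => by ring
  rw [baileyStep, sum_congr rfl hterm, sum_comm]
  refine sum_congr rfl fun r hr => ?_
  rw [← mul_sum, sum_qKernel_mul_phiNum_mul_baileyKernel hQ ha z
    (Nat.lt_succ_iff.1 (mem_range.1 hr))]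
  ring

lemma phiNum_zero_left (a Q : ℂ) (s : ℕ) : phiNum Q 0 (a * Q) s = a ^ s * Q ^ s ^ 2 := by
  induction s with
  | zero => simp [phiNum_zero]
  | succ s ih =>
    rw [phiNum_succ, ih]
    ring

/-- Bailey's lemma, with both parameters sent to infinity. -/
lemma IsBaileyPair.step (h : IsBaileyPair a Q α β) (hQ : ∀ n, qPoch Q Q n ≠ 0)
    (ha : ∀ n, qPoch (a * Q) Q n ≠ 0) :
    IsBaileyPair a Q (fun r => a ^ r * Q ^ r ^ 2 * α r)
      (baileyStep Q (fun s => a ^ s * Q ^ s ^ 2) β) := fun N => by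
  simpa only [funext (phiNum_zero_left a Q), zero_mul, qPoch_zero_left, mul_one] using
    h.baileyStep_phiNum hQ ha 0 N

/-- The signed ratio `(-1)^r Q^{C(r,2)} (b;Q)_r / (Q;Q)_r` occurring in the unit Bailey pair. -/
noncomputable def unitCoeff (b Q : ℂ) (r : ℕ) : ℂ :=
  (-1) ^ r * Q ^ r.choose 2 * (qPoch b Q r / qPoch Q Q r)

lemma unitCoeff_zero (b Q : ℂ) : unitCoeff b Q 0 = 1 := by simp [unitCoeff, qPoch_zero]

lemma one_sub_pow_mul_sum_unitCoeff (hQ : ∀ n, qPoch Q Q n ≠ 0) (hb : ∀ n, qPoch b Q n ≠ 0)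
    {s R : ℕ} (hR : R ≤ s) :
    (1 - Q ^ s) * ∑ r ∈ range (R + 1),
        unitCoeff b Q r * ((1 - b * Q ^ (2 * r)) / (1 - b)) * baileyKernel b Q s r =
      (-1) ^ R * Q ^ (R + 1).choose 2 * (qPoch (b * Q) Q R / qPoch Q Q R) *
        (qKernel Q s (R + 1) / qPoch (b * Q) Q (s + R)) := by
  have hb1 : 1 - b ≠ 0 := qPoch_one b Q ▸ hb 1
  have hbQ : ∀ n, qPoch (b * Q) Q n ≠ 0 := by simpa using qPoch_mul_pow_ne_zero hb 1
  induction R with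
  | zero =>
    rw [zero_add, sum_range_one, qKernel_succ_right hQ s.zero_le]
    simp [unitCoeff_zero, qPoch_zero, baileyKernel, div_self hb1, mul_div_assoc]
  | succ R ih =>
    have hpow := pow_sub_mul_pow Q hR
    have hQR := hQ R
    have hbQs := hbQ (s + R)
    have hQ1 : 1 - Q * Q ^ R ≠ 0 := one_sub_mul_pow_ne_zero hQ R
    have hb2 : 1 - b * Q * Q ^ (s + R) ≠ 0 := one_sub_mul_pow_ne_zero hbQ (s + R)
    rw [sum_range_succ, mul_add, ih (Nat.le_of_succ_le hR), qKernel_succ_right hQ hR,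
      baileyKernel, unitCoeff, qPoch_succ_left b, ← add_assoc, qPoch_succ _ _ (s + R),
      qPoch_succ _ _ R, qPoch_succ _ _ R, succ_choose_two (R + 1)]
    field_simp
    linear_combination Q ^ (R + 1).choose 2 * qPoch (b * Q) Q R * qKernel Q s (R + 1) *
      (-1) ^ (R + 1) * (1 - b * Q * Q ^ R) * hpow

lemma isBaileyPair_unit (hQ : ∀ n, qPoch Q Q n ≠ 0) (hb : ∀ n, qPoch b Q n ≠ 0) :
    IsBaileyPair b Q (fun r => unitCoeff b Q r * ((1 - b * Q ^ (2 * r)) / (1 - b)))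
      (Pi.single 0 1) := by
  have hb1 : 1 - b ≠ 0 := qPoch_one b Q ▸ hb 1
  rintro (_ | n)
  · simp [unitCoeff_zero, baileyKernel, qKernel_zero_right, qPoch_zero, div_self hb1]
  · have hn : 1 - Q ^ (n + 1) ≠ 0 := pow_succ' Q n ▸ one_sub_mul_pow_ne_zero hQ n
    have hsum := one_sub_pow_mul_sum_unitCoeff hQ hb (le_refl (n + 1))
    rw [qKernel_of_lt (Nat.lt_succ_self _), zero_div, mul_zero] at hsum
    rw [Pi.single_eq_of_ne n.succ_ne_zero, (mul_eq_zero_iff_left hn).1 hsum]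

/-- The coefficients `g_r - a Q^{2r-1} g_{r-1}` of a Bailey pair relative to `a` obtained from one
relative to `a Q`. -/
def lowerAlpha (a Q : ℂ) (g : ℕ → ℂ) : ℕ → ℂ
  | 0 => g 0
  | r + 1 => g (r + 1) - a * Q ^ (2 * r + 1) * g r

lemma sum_lowerAlpha_mul (a Q : ℂ) (g y : ℕ → ℂ) (n : ℕ) :
    ∑ r ∈ range (n + 1), lowerAlpha a Q g r * y r =
      ∑ r ∈ range (n + 1), g r * (y r - a * Q ^ (2 * r + 1) * y (r + 1)) +
        a * Q ^ (2 * n + 1) * g n * y (n + 1) := by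
  induction n with
  | zero =>
    simp only [zero_add, sum_range_one, lowerAlpha]
    ring
  | succ n ih =>
    rw [sum_range_succ, ih, sum_range_succ _ (n + 1), lowerAlpha]
    ring

lemma baileyKernel_sub_baileyKernel_succ (hQ : ∀ n, qPoch Q Q n ≠ 0)
    (ha : ∀ n, qPoch (a * Q) Q n ≠ 0) {n r : ℕ} (h : r ≤ n) :
    baileyKernel a Q n r - a * Q ^ (2 * r + 1) * baileyKernel a Q n (r + 1) =
      (1 - a * Q ^ (2 * r + 1)) / (1 - a * Q) * baileyKernel (a * Q) Q n r := by
  have h1 : 1 - a * Q ≠ 0 := qPoch_one (a * Q) Q ▸ ha 1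
  have hshift : (1 - a * Q) * qPoch (a * Q * Q) Q (n + r) =
      qPoch (a * Q) Q (n + r) * (1 - a * Q * Q ^ (n + r)) := by
    rw [← qPoch_succ_left, qPoch_succ]
  have hpow := pow_sub_mul_pow Q h
  have hnr := ha (n + r)
  have hlast : 1 - a * Q * Q ^ (n + r) ≠ 0 := one_sub_mul_pow_ne_zero ha (n + r)
  rw [baileyKernel, baileyKernel, baileyKernel, qKernel_succ_right hQ h, ← add_assoc,
    qPoch_succ, eq_div_of_mul_eq h1 ((mul_comm _ _).trans hshift)]
  field_simp
  linear_combination qKernel Q n r * a * Q ^ (r + 1) * hpow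

lemma IsBaileyPair.lower {g : ℕ → ℂ} (hQ : ∀ n, qPoch Q Q n ≠ 0)
    (ha : ∀ n, qPoch (a * Q) Q n ≠ 0)
    (h : IsBaileyPair (a * Q) Q (fun r => g r * ((1 - a * Q ^ (2 * r + 1)) / (1 - a * Q))) β) :
    IsBaileyPair a Q (lowerAlpha a Q g) β := by
  intro n
  rw [sum_lowerAlpha_mul, baileyKernel_of_lt n.lt_succ_self, mul_zero, add_zero, h n]
  refine sum_congr rfl fun r hr => ?_
  rw [baileyKernel_sub_baileyKernel_succ hQ ha (Nat.lt_succ_iff.1 (mem_range.1 hr)), mul_assoc]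

end Bailey

section Growth

variable {f g : ℕ → ℂ} {q Q : ℂ}

/-- At most geometric growth. The exponent `n + 1` absorbs a multiplicative constant. -/
def GeomBounded (f : ℕ → ℂ) : Prop := ∃ R : ℝ, ∀ n, ‖f n‖ ≤ R ^ (n + 1)

/-- Decay faster than every geometric sequence, in summed form. -/
def RapidlyDecreasing (f : ℕ → ℂ) : Prop :=
  ∀ R : ℝ, 0 ≤ R → Summable fun n => R ^ n * ‖f n‖

lemma nonneg_of_norm_le_pow_succ {R : ℝ} (h : ∀ n, ‖f n‖ ≤ R ^ (n + 1)) : 0 ≤ R := by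
  simpa using (norm_nonneg _).trans (h 0)

lemma geomBounded_of_norm_le {C : ℝ} (h : ∀ n, ‖f n‖ ≤ C) : GeomBounded f :=
  ⟨max 1 C, fun n => (h n).trans <|
    (le_max_right 1 C).trans (le_self_pow₀ (le_max_left 1 C) n.succ_ne_zero)⟩

lemma geomBounded_const (c : ℂ) : GeomBounded fun _ => c := geomBounded_of_norm_le fun _ => le_rfl

lemma geomBounded_pow_comp (hQ : ‖Q‖ ≤ 1) (φ : ℕ → ℕ) : GeomBounded fun n => Q ^ φ n :=
  geomBounded_of_norm_le (C := 1) fun n => by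
    rw [norm_pow]
    exact pow_le_one₀ (norm_nonneg _) hQ

lemma geomBounded_const_pow (c : ℂ) : GeomBounded fun n => c ^ n :=
  ⟨max 1 ‖c‖, fun n => by
    rw [norm_pow]
    exact (pow_le_pow_left₀ (norm_nonneg _) (le_max_right 1 ‖c‖) n).trans
      (pow_le_pow_right₀ (le_max_left _ _) n.le_succ)⟩

lemma GeomBounded.mul (hf : GeomBounded f) (hg : GeomBounded g) :
    GeomBounded fun n => f n * g n := by
  obtain ⟨R, hR⟩ := hf
  obtain ⟨S, hS⟩ := hg
  have := nonneg_of_norm_le_pow_succ hR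
  refine ⟨R * S, fun n => ?_⟩
  rw [norm_mul, mul_pow]
  gcongr
  exacts [hR n, hS n]

lemma GeomBounded.pow (hf : GeomBounded f) (k : ℕ) : GeomBounded fun n => f n ^ k := by
  induction k with
  | zero => simpa only [pow_zero] using geomBounded_const 1
  | succ k ih => simpa only [pow_succ] using ih.mul hf

lemma GeomBounded.lowerAlpha (hQ : ‖Q‖ ≤ 1) (a : ℂ) (hg : GeomBounded g) :
    GeomBounded (lowerAlpha a Q g) := by
  obtain ⟨R, hR⟩ := hg
  have hR0 := nonneg_of_norm_le_pow_succ hR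
  refine ⟨R + ‖a‖, fun n => ?_⟩
  cases n with
  | zero =>
    refine (hR 0).trans ?_
    gcongr
    exact le_add_of_nonneg_right (norm_nonneg a)
  | succ n =>
    have hQn : ‖Q ^ (2 * n + 1)‖ ≤ 1 := by
      rw [norm_pow]
      exact pow_le_one₀ (norm_nonneg _) hQ
    calc ‖g (n + 1) - a * Q ^ (2 * n + 1) * g n‖
        ≤ ‖g (n + 1)‖ + ‖a‖ * ‖Q ^ (2 * n + 1)‖ * ‖g n‖ := by
          simpa only [norm_mul] using norm_sub_le (g (n + 1)) (a * Q ^ (2 * n + 1) * g n)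
      _ ≤ R ^ (n + 2) + ‖a‖ * 1 * R ^ (n + 1) := by
          gcongr
          exacts [hR (n + 1), hR n]
      _ = R ^ (n + 1) * (R + ‖a‖) := by ring
      _ ≤ (R + ‖a‖) ^ (n + 1) * (R + ‖a‖) := by
          gcongr
          exact le_add_of_nonneg_right (norm_nonneg a)
      _ = (R + ‖a‖) ^ (n + 1 + 1) := (pow_succ _ _).symm

lemma norm_sq_lt_one (hq : ‖q‖ < 1) : ‖q ^ 2‖ < 1 := by
  rw [norm_pow]
  exact pow_lt_one₀ (norm_nonneg q) hq two_ne_zero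

lemma geomBounded_qPoch (hQ : ‖Q‖ < 1) (x : ℂ) : GeomBounded (qPoch x Q) :=
  let ⟨_, hC⟩ := exists_norm_qPoch_le hQ x
  geomBounded_of_norm_le hC

lemma geomBounded_unitCoeff (hQ : ‖Q‖ < 1) (b : ℂ) : GeomBounded (unitCoeff b Q) := by
  obtain ⟨C, hC⟩ := exists_norm_inv_qPoch_le hQ (qPoch_self_ne_zero hQ)
  simpa only [unitCoeff, div_eq_mul_inv] using!
    ((geomBounded_const_pow (-1)).mul (geomBounded_pow_comp hQ.le fun n => n.choose 2)).mul
      ((geomBounded_qPoch hQ b).mul (geomBounded_of_norm_le hC))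

lemma summable_pow_mul_pow_sq {ρ R : ℝ} (h0 : 0 ≤ ρ) (h1 : ρ < 1) (hR : 0 ≤ R) :
    Summable fun j : ℕ => R ^ j * ρ ^ j ^ 2 := by
  refine Summable.of_nonneg_of_le (fun j => by positivity) (fun j => ?_)
    (summable_pow_mul_pow_choose h0 h1 hR)
  gcongr R ^ j * ?_
  exact pow_le_pow_of_le_one h0 h1.le (by rw [sq_eq_two_mul_choose_add j]; lia)

lemma GeomBounded.rapidlyDecreasing_mul_pow_sq (hf : GeomBounded f) (hq : ‖q‖ < 1) :
    RapidlyDecreasing fun s => f s * q ^ s ^ 2 := by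
  obtain ⟨S, hS⟩ := hf
  have hS0 := nonneg_of_norm_le_pow_succ hS
  intro R hR
  refine Summable.of_nonneg_of_le (fun s => by positivity) (fun s => ?_)
    ((summable_pow_mul_pow_sq (norm_nonneg q) hq (mul_nonneg hR hS0)).mul_left S)
  rw [norm_mul, norm_pow]
  calc R ^ s * (‖f s‖ * ‖q‖ ^ s ^ 2) ≤ R ^ s * (S ^ (s + 1) * ‖q‖ ^ s ^ 2) := by
        gcongr
        exact hS s
    _ = S * ((R * S) ^ s * ‖q‖ ^ s ^ 2) := by ring

lemma RapidlyDecreasing.summable_norm (hf : RapidlyDecreasing f) : Summable fun n => ‖f n‖ := by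
  simpa only [one_pow, one_mul] using hf 1 zero_le_one

end Growth

section Interchange

variable {a Q : ℂ} {α β γ δ : ℕ → ℂ}

lemma exists_norm_baileyKernel_le (hQ : ‖Q‖ < 1) (ha : ∀ n, qPoch (a * Q) Q n ≠ 0) :
    ∃ C, ∀ n r, ‖baileyKernel a Q n r‖ ≤ C := by
  obtain ⟨A, hA⟩ := exists_norm_qKernel_le hQ
  obtain ⟨B, hB⟩ := exists_norm_inv_qPoch_le hQ ha
  refine ⟨A * B, fun n r => ?_⟩
  rw [baileyKernel, div_eq_mul_inv, norm_mul]
  exact mul_le_mul (hA n r) (hB _) (norm_nonneg _) ((norm_nonneg _).trans (hA 0 0))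

lemma summable_mul_baileyKernel (hQ : ‖Q‖ < 1) (ha : ∀ n, qPoch (a * Q) Q n ≠ 0)
    (hα : GeomBounded α) (hδ : RapidlyDecreasing δ) :
    Summable fun p : ℕ × ℕ => α p.1 * (δ p.2 * baileyKernel a Q p.2 p.1) := by
  obtain ⟨R, hR⟩ := hα
  obtain ⟨C, hC⟩ := exists_norm_baileyKernel_le hQ ha
  have hC0 : 0 ≤ C := (norm_nonneg _).trans (hC 0 0)
  have hR0 := nonneg_of_norm_le_pow_succ hR
  have hα' (n : ℕ) : ‖α n‖ ≤ max 1 R ^ (n + 1) :=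
    (hR n).trans (pow_le_pow_left₀ hR0 (le_max_right 1 R) _)
  set S := max 1 R
  have hS1 : 1 ≤ S := le_max_left 1 R
  have : 0 ≤ S := zero_le_one.trans hS1
  have hgeom : Summable fun r : ℕ => (1 / 2 : ℝ) ^ r :=
    summable_geometric_of_lt_one (by norm_num) (by norm_num)
  refine Summable.of_norm_bounded ((hgeom.mul_of_nonneg (hδ (2 * S) (by positivity))
    (fun r => by positivity) (fun s => by positivity)).mul_left (S * C)) ?_
  rintro ⟨r, s⟩
  obtain hlt | hle := lt_or_ge s r
  · simp only [baileyKernel_of_lt hlt, mul_zero, norm_zero]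
    positivity
  -- On the support `r ≤ s`, so `S ^ r ≤ (2 S) ^ s / 2 ^ r`.
  have hpow : S ^ r ≤ (1 / 2) ^ r * (2 * S) ^ s := by
    calc S ^ r = (1 / 2) ^ r * (2 * S) ^ r := by rw [← mul_pow]; congr 1; ring
      _ ≤ (1 / 2) ^ r * (2 * S) ^ s := by gcongr; linarith
  calc ‖α r * (δ s * baileyKernel a Q s r)‖ ≤ S ^ (r + 1) * (‖δ s‖ * C) := by
        rw [norm_mul, norm_mul]
        gcongr
        exacts [hα' r, hC s r]
    _ = S * C * (S ^ r * ‖δ s‖) := by ring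
    _ ≤ S * C * ((1 / 2) ^ r * (2 * S) ^ s * ‖δ s‖) := by gcongr
    _ = S * C * ((1 / 2) ^ r * ((2 * S) ^ s * ‖δ s‖)) := by ring

/-- The Bailey transform: sum `α r * (δ s * baileyKernel a Q s r)` over `r` and `s` in either
order. -/
lemma IsBaileyPair.hasSum (h : IsBaileyPair a Q α β) (hQ : ‖Q‖ < 1)
    (ha : ∀ n, qPoch (a * Q) Q n ≠ 0) (hα : GeomBounded α) (hδ : RapidlyDecreasing δ)
    (hγ : ∀ r, HasSum (fun s => δ s * baileyKernel a Q s r) (γ r)) :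
    HasSum (fun r => α r * γ r) (∑' s, δ s * β s) := by
  have htotal := (summable_mul_baileyKernel hQ ha hα hδ).hasSum
  have hcolumn (s : ℕ) :
      HasSum (fun r => α r * (δ s * baileyKernel a Q s r)) (δ s * β s) := by
    rw [h s, mul_sum]
    simp only [mul_left_comm (δ s)]
    refine hasSum_sum_of_ne_finset_zero fun r hr => ?_
    rw [baileyKernel_of_lt (by simpa using hr), mul_zero, mul_zero]
  have hβ := ((Equiv.prodComm ℕ ℕ).hasSum_iff.2 htotal).prod_fiberwise hcolumn
  rw [hβ.tsum_eq]
  exact htotal.prod_fiberwise fun r => (hγ r).mul_left (α r)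

lemma tsum_lowerAlpha_mul {g y : ℕ → ℂ} (hg : Summable fun r => g r * y r)
    (hlower : Summable fun r => lowerAlpha a Q g r * y r) :
    ∑' r, lowerAlpha a Q g r * y r =
      ∑' r, g r * (y r - a * Q ^ (2 * r + 1) * y (r + 1)) := by
  have hg' := (summable_nat_add_iff 1).2 hg
  have hlower' := (summable_nat_add_iff 1).2 hlower
  have hshift : Summable fun r => a * Q ^ (2 * r + 1) * g r * y (r + 1) :=
    (hg'.sub hlower').congr fun r => by rw [lowerAlpha]; ring
  calc ∑' r, lowerAlpha a Q g r * y r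
      = g 0 * y 0 + ∑' r, (g (r + 1) * y (r + 1) - a * Q ^ (2 * r + 1) * g r * y (r + 1)) := by
        rw [hlower.tsum_eq_zero_add]
        simp only [lowerAlpha, sub_mul]
    _ = ∑' r, g r * y r - ∑' r, a * Q ^ (2 * r + 1) * g r * y (r + 1) := by
        rw [hg'.tsum_sub hshift, hg.tsum_eq_zero_add]
        ring
    _ = ∑' r, g r * (y r - a * Q ^ (2 * r + 1) * y (r + 1)) := by
        rw [← hg.tsum_sub hshift]
        exact tsum_congr fun r => by ring

end Interchange

section Multisum

variable {Q : ℂ} {w : ℕ → ℕ → ℂ}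

/-- The sum of `∏ w_m(s_m) / ((Q;Q)_{N-s_0} (Q;Q)_{s_0-s_1} ⋯ (Q;Q)_{s_{n-1}})` over all tuples
`N ≥ s_0 ≥ ⋯ ≥ s_{n-1} ≥ 0`. -/
noncomputable def nestedSum (Q : ℂ) : ℕ → (ℕ → ℕ → ℂ) → ℕ → ℂ
  | 0, _ => fun N => qKernel Q N 0
  | n + 1, w => baileyStep Q (w 0) (nestedSum Q n fun m => w (m + 1))

/-- The extension of a tuple by zeros, which encodes the convention that the variable after the
last one is `0`. -/
def extendZero {n : ℕ} (s : Fin n → ℕ) : ℕ → ℕ := fun m => if h : m < n then s ⟨m, h⟩ else 0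

lemma extendZero_of_lt {n m : ℕ} (s : Fin n → ℕ) (h : m < n) : extendZero s m = s ⟨m, h⟩ :=
  dif_pos h

lemma extendZero_cons_zero {n : ℕ} (x : ℕ) (s : Fin n → ℕ) :
    extendZero (Fin.cons x s : Fin (n + 1) → ℕ) 0 = x := extendZero_of_lt _ n.succ_pos

lemma extendZero_cons_succ {n : ℕ} (x : ℕ) (s : Fin n → ℕ) (m : ℕ) :
    extendZero (Fin.cons x s : Fin (n + 1) → ℕ) (m + 1) = extendZero s m := by
  simp only [extendZero, Nat.add_lt_add_iff_right]
  rfl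

/-- The summand `∏_{m < n} w_m(t_m) / (Q;Q)_{t_m - t_{m+1}}` of a multisum, which vanishes unless
`t_0 ≥ t_1 ≥ ⋯ ≥ t_n`. -/
noncomputable def chainTerm (Q : ℂ) (n : ℕ) (w : ℕ → ℕ → ℂ) (t : ℕ → ℕ) : ℂ :=
  ∏ m ∈ range n, w m (t m) * qKernel Q (t m) (t (m + 1))

lemma chainTerm_cons (Q : ℂ) {n : ℕ} (w : ℕ → ℕ → ℂ) (x : ℕ) (s : Fin n → ℕ) :
    chainTerm Q (n + 1) w (extendZero (Fin.cons x s : Fin (n + 1) → ℕ)) =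
      w 0 x * (qKernel Q x (extendZero s 0) *
        chainTerm Q n (fun m => w (m + 1)) (extendZero s)) := by
  rw [chainTerm, prod_range_succ', mul_comm, mul_assoc]
  simp only [extendZero_cons_succ, extendZero_cons_zero, chainTerm]

lemma chainTerm_eq_div {n : ℕ} {s : Fin n → ℕ} (hs : Antitone s) :
    chainTerm Q n w (extendZero s) = (∏ m ∈ range n, w m (extendZero s m)) /
      ∏ m ∈ range n, qPoch Q Q (extendZero s m - extendZero s (m + 1)) := by
  rw [chainTerm, prod_mul_distrib, div_eq_mul_inv, ← prod_inv_distrib]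
  congr 1
  refine prod_congr rfl fun m hm => qKernel_of_le ?_
  rw [extendZero_of_lt s (mem_range.1 hm), extendZero]
  split_ifs
  exacts [hs (Nat.le_succ m), Nat.zero_le _]

lemma antitone_of_chainTerm_ne_zero {n : ℕ} {s : Fin n → ℕ}
    (h : chainTerm Q n w (extendZero s) ≠ 0) : Antitone s := by
  cases n with
  | zero => exact Subsingleton.antitone s
  | succ n =>
    refine Fin.antitone_iff_succ_le.2 fun j => ?_
    by_contra! hlt
    refine h (prod_eq_zero (mem_range.2 j.castSucc.isLt) ?_)
    rw [Fin.val_castSucc, extendZero_of_lt s (Nat.succ_lt_succ j.isLt),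
      extendZero_of_lt s (Nat.lt_succ_of_lt j.isLt)]
    exact mul_eq_zero_of_right _ (qKernel_of_lt hlt)

lemma tsum_antitone_eq_tsum_chainTerm (Q : ℂ) (n : ℕ) (w : ℕ → ℕ → ℂ) :
    ∑' s : {s : Fin n → ℕ // Antitone s}, (∏ m ∈ range n, w m (extendZero s.1 m)) /
        ∏ m ∈ range n, qPoch Q Q (extendZero s.1 m - extendZero s.1 (m + 1)) =
      ∑' s : Fin n → ℕ, chainTerm Q n w (extendZero s) := by
  rw [← tsum_subtype_eq_of_support_subset (s := {s | Antitone s})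
    fun s hs => antitone_of_chainTerm_ne_zero hs]
  exact tsum_congr fun s => (chainTerm_eq_div s.2).symm

lemma summable_prod_fin (n : ℕ) {u : ℕ → ℕ → ℝ} (h0 : ∀ m s, 0 ≤ u m s)
    (hu : ∀ m, Summable (u m)) :
    Summable fun s : Fin n → ℕ => ∏ m : Fin n, u m (s m) := by
  induction n generalizing u with
  | zero => exact Summable.of_finite
  | succ n ih =>
    rw [← (Fin.consEquiv (fun _ : Fin (n + 1) => ℕ)).summable_iff]
    refine ((hu 0).mul_of_nonneg (ih (fun m => h0 (m + 1)) fun m => hu (m + 1)) (h0 0)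
      fun s => prod_nonneg fun m _ => h0 _ _).congr ?_
    rintro ⟨x, t⟩
    simp [Fin.consEquiv, Fin.prod_univ_succ]

lemma summable_mul_chainTerm (hQ : ‖Q‖ < 1) (hw : ∀ m, Summable fun s => ‖w m s‖) {u : ℕ → ℂ}
    {C : ℝ} (hu : ∀ s, ‖u s‖ ≤ C) (n : ℕ) :
    Summable fun s : Fin n → ℕ => u (extendZero s 0) * chainTerm Q n w (extendZero s) := by
  obtain ⟨A, hA⟩ := exists_norm_qKernel_le hQ
  refine Summable.of_norm_bounded
    (((summable_prod_fin n (fun m s => norm_nonneg (w m s)) hw).mul_right (A ^ n)).mul_left C)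
    fun s => ?_
  have hprod : ‖chainTerm Q n w (extendZero s)‖ ≤ (∏ m : Fin n, ‖w m (s m)‖) * A ^ n := by
    rw [chainTerm, norm_prod, prod_range]
    refine (prod_le_prod (fun m _ => norm_nonneg _) (g := fun m : Fin n => ‖w m (s m)‖ * A)
      fun m _ => ?_).trans_eq (by simp [prod_mul_distrib])
    rw [norm_mul, extendZero_of_lt s m.isLt]
    exact mul_le_mul_of_nonneg_left (hA _ _) (norm_nonneg _)
  rw [norm_mul]
  exact mul_le_mul (hu _) hprod (norm_nonneg _) ((norm_nonneg _).trans (hu 0))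

lemma tsum_mul_chainTerm_succ (hQ : ‖Q‖ < 1) (hw : ∀ m, Summable fun s => ‖w m s‖) {u : ℕ → ℂ}
    {C : ℝ} (hu : ∀ s, ‖u s‖ ≤ C) (n : ℕ) :
    ∑' s : Fin (n + 1) → ℕ, u (extendZero s 0) * chainTerm Q (n + 1) w (extendZero s) =
      ∑' x, u x * (w 0 x * ∑' s : Fin n → ℕ, qKernel Q x (extendZero s 0) *
        chainTerm Q n (fun m => w (m + 1)) (extendZero s)) := by
  have hsum := summable_mul_chainTerm hQ hw hu (n + 1)
  rw [← (Fin.consEquiv (fun _ : Fin (n + 1) => ℕ)).summable_iff] at hsum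
  rw [← (Fin.consEquiv (fun _ : Fin (n + 1) => ℕ)).tsum_eq]
  refine (Summable.tsum_prod hsum).trans (tsum_congr fun x => ?_)
  simp only [Function.comp_apply, Fin.consEquiv, Equiv.coe_fn_mk, extendZero_cons_zero,
    chainTerm_cons, tsum_mul_left]

lemma tsum_qKernel_mul_chainTerm (hQ : ‖Q‖ < 1) (n : ℕ) (hw : ∀ m, Summable fun s => ‖w m s‖)
    (N : ℕ) :
    ∑' s : Fin n → ℕ, qKernel Q N (extendZero s 0) * chainTerm Q n w (extendZero s) =
      nestedSum Q n w N := by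
  induction n generalizing w N with
  | zero => simp [tsum_fintype, nestedSum, extendZero, chainTerm]
  | succ n ih =>
    obtain ⟨C, hC⟩ := exists_norm_qKernel_le hQ
    rw [tsum_mul_chainTerm_succ hQ hw (hC N), nestedSum, baileyStep]
    simp only [ih fun m => hw (m + 1)]
    refine tsum_eq_sum fun s hs => ?_
    rw [qKernel_of_lt (by simpa using hs), zero_mul]

theorem tsum_antitone_eq_tsum_mul_nestedSum (hQ : ‖Q‖ < 1) (n : ℕ)
    (hw : ∀ m, Summable fun s => ‖w m s‖) :
    ∑' s : {s : Fin (n + 1) → ℕ // Antitone s}, (∏ m ∈ range (n + 1), w m (extendZero s.1 m)) /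
        ∏ m ∈ range (n + 1), qPoch Q Q (extendZero s.1 m - extendZero s.1 (m + 1)) =
      ∑' s, w 0 s * nestedSum Q n (fun m => w (m + 1)) s := by
  rw [tsum_antitone_eq_tsum_chainTerm]
  simpa only [one_mul, tsum_qKernel_mul_chainTerm hQ n fun m => hw (m + 1)] using
    tsum_mul_chainTerm_succ hQ hw (u := fun _ => 1) (fun _ => le_rfl) n

end Multisum

section EvenVariables

variable {q : ℂ}

lemma baileyStep_single (Q : ℂ) (w : ℕ → ℂ) (N : ℕ) :
    baileyStep Q w (Pi.single 0 1) N = qKernel Q N 0 * w 0 := by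
  rw [baileyStep, sum_eq_single_of_mem 0 (mem_range.2 N.succ_pos)]
  · rw [Pi.single_eq_same, mul_one]
  · intro s _ hs
    rw [Pi.single_eq_of_ne hs, mul_zero, mul_zero]

lemma baileyKernel_zero_left (Q : ℂ) (n r : ℕ) : baileyKernel 0 Q n r = qKernel Q n r := by
  rw [baileyKernel, zero_mul, qPoch_zero_left, div_one]

lemma isBaileyPair_zero_baileyStep (Q : ℂ) (v β : ℕ → ℂ) :
    IsBaileyPair 0 Q (fun r => v r * β r) (baileyStep Q v β) := fun N => by
  simp only [baileyStep, baileyKernel_zero_left, mul_comm]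

lemma phiNum_neg_zero_mul (q : ℂ) (s : ℕ) : phiNum (q ^ 2) (-q) (0 * q ^ 2) s = q ^ s ^ 2 := by
  induction s with
  | zero => simp [phiNum_zero]
  | succ s ih =>
    rw [phiNum_succ, ih]
    ring

lemma baileyStep_pow_sq (hQ : ∀ n, qPoch (q ^ 2) (q ^ 2) n ≠ 0) (v β : ℕ → ℂ) (N : ℕ) :
    baileyStep (q ^ 2) (fun s => q ^ s ^ 2)
        (baileyStep (q ^ 2) v fun t => qPoch (-q) (q ^ 2) t * β t) N =
      qPoch (-q) (q ^ 2) N * baileyStep (q ^ 2) (fun t => v t * q ^ t ^ 2) β N := by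
  have h := (isBaileyPair_zero_baileyStep (q ^ 2) v
    fun t => qPoch (-q) (q ^ 2) t * β t).baileyStep_phiNum hQ
      (fun n => by rw [zero_mul, qPoch_zero_left]; exact one_ne_zero) (-q) N
  rw [funext (phiNum_neg_zero_mul q)] at h
  rw [h, baileyStep, mul_sum]
  refine sum_congr rfl fun r hr => ?_
  have hsplit := qPoch_add (-q) (q ^ 2) r (N - r)
  rw [Nat.add_sub_cancel' (Nat.lt_succ_iff.1 (mem_range.1 hr))] at hsplit
  rw [hsplit, baileyKernel_zero_left]
  ring

lemma baileyStep_pow_sq_qKernel_zero (hQ : ∀ n, qPoch (q ^ 2) (q ^ 2) n ≠ 0) (N : ℕ) :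
    baileyStep (q ^ 2) (fun s => q ^ s ^ 2) (fun s => qKernel (q ^ 2) s 0) N =
      qPoch (-q) (q ^ 2) N * qKernel (q ^ 2) N 0 := by
  have hsingle : (fun t => qPoch (-q) (q ^ 2) t * (Pi.single 0 1 : ℕ → ℂ) t) = Pi.single 0 1 := by
    funext t
    obtain rfl | ht := eq_or_ne t 0
    · rw [qPoch_zero, one_mul]
    · rw [Pi.single_eq_of_ne ht, mul_zero]
  simpa only [hsingle, funext (baileyStep_single (q ^ 2) fun _ => 1), baileyStep_single, mul_one,
    one_mul, ne_eq, OfNat.ofNat_ne_zero, not_false_eq_true, zero_pow, pow_zero] using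
    baileyStep_pow_sq hQ (fun _ => 1) (Pi.single 0 1) N

theorem nestedSum_two_mul_add_one (hQ : ∀ n, qPoch (q ^ 2) (q ^ 2) n ≠ 0) (n : ℕ)
    {v : ℕ → ℕ → ℂ} (hv : ∀ m s, v (2 * m) s = q ^ s ^ 2) :
    nestedSum (q ^ 2) (2 * n + 1) v = fun N =>
      qPoch (-q) (q ^ 2) N * nestedSum (q ^ 2) n (fun m s => v (2 * m + 1) s * q ^ s ^ 2) N := by
  have hv0 : v 0 = fun s => q ^ s ^ 2 := funext (hv 0)
  funext N
  induction n generalizing v N with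
  | zero => simpa only [nestedSum, hv0] using baileyStep_pow_sq_qKernel_zero hQ N
  | succ n ih =>
    have hv2 (m s : ℕ) : v (2 * m + 1 + 1) s = q ^ s ^ 2 := hv (m + 1) s
    have hunfold : nestedSum (q ^ 2) (2 * (n + 1) + 1) v = baileyStep (q ^ 2) (v 0)
      (baileyStep (q ^ 2) (v 1) (nestedSum (q ^ 2) (2 * n + 1) fun m => v (m + 1 + 1))) := rfl
    rw [hunfold, hv0, funext (ih hv2 (funext (hv2 0))), baileyStep_pow_sq hQ]
    rfl

end EvenVariables

section BaileyChain

variable {a b q Q : ℂ} {α : ℕ → ℂ} {w : ℕ → ℕ → ℂ}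

lemma IsBaileyPair.nestedSum_add {n p : ℕ} (hQ : ∀ n, qPoch Q Q n ≠ 0)
    (ha : ∀ n, qPoch (a * Q) Q n ≠ 0) (hw : ∀ m < p, ∀ s, w m s = a ^ s * Q ^ s ^ 2)
    (h : IsBaileyPair a Q α (nestedSum Q n fun m => w (m + p))) :
    IsBaileyPair a Q (fun r => α r * (a ^ r * Q ^ r ^ 2) ^ p) (nestedSum Q (n + p) w) := by
  induction p generalizing w with
  | zero => simpa only [pow_zero, mul_one, add_zero] using h
  | succ p ih =>
    have hstep := (ih (w := fun m => w (m + 1)) (fun m hm => hw (m + 1) (by lia)) h).step hQ ha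
    rw [← funext (hw 0 p.succ_pos)] at hstep
    convert hstep using 1
    · funext r
      ring
    · rfl

/-- The coefficients `((-1)^r Q^{C(r,2)} (b;Q)_r / (Q;Q)_r) (b^r Q^{r²})^{d+1}` that `d + 1`
applications of Bailey's lemma produce from the unit Bailey pair. -/
noncomputable def chainCoeff (b Q : ℂ) (d r : ℕ) : ℂ :=
  unitCoeff b Q r * (b ^ r * Q ^ r ^ 2) ^ (d + 1)

lemma isBaileyPair_chainCoeff (hQ : ∀ n, qPoch Q Q n ≠ 0) (hb : ∀ n, qPoch b Q n ≠ 0) (d : ℕ) :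
    IsBaileyPair b Q (fun r => chainCoeff b Q d r * ((1 - b * Q ^ (2 * r)) / (1 - b)))
      (nestedSum Q d fun _ s => b ^ s * Q ^ s ^ 2) := by
  have hbQ : ∀ n, qPoch (b * Q) Q n ≠ 0 := by simpa using qPoch_mul_pow_ne_zero hb 1
  have hbase : baileyStep Q (fun s => b ^ s * Q ^ s ^ 2) (Pi.single 0 1) =
      nestedSum Q 0 fun _ s => b ^ s * Q ^ s ^ 2 := by
    funext N
    simp [baileyStep_single, nestedSum]
  have h := (isBaileyPair_unit hQ hb).step hQ hbQ
  rw [hbase] at h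
  have hchain := IsBaileyPair.nestedSum_add (p := d) (w := fun _ s => b ^ s * Q ^ s ^ 2) hQ hbQ
    (fun _ _ _ => rfl) h
  rw [zero_add] at hchain
  convert hchain using 1
  funext r
  rw [chainCoeff]
  ring

lemma isBaileyPair_chainCoeff_mul (hQ : ∀ n, qPoch Q Q n ≠ 0) (ha : ∀ n, qPoch (a * Q) Q n ≠ 0)
    (d : ℕ) :
    IsBaileyPair (a * Q) Q
      (fun r => chainCoeff (a * Q) Q d r * ((1 - a * Q ^ (2 * r + 1)) / (1 - a * Q)))
      (nestedSum Q d fun _ s => (a * Q) ^ s * Q ^ s ^ 2) := by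
  simpa only [mul_assoc a Q, ← pow_succ'] using isBaileyPair_chainCoeff hQ ha d

lemma isBaileyPair_lowerAlpha_chainCoeff (hQ : ∀ n, qPoch Q Q n ≠ 0)
    (ha : ∀ n, qPoch (a * Q) Q n ≠ 0) (d p : ℕ) :
    IsBaileyPair a Q
      (fun r => lowerAlpha a Q (chainCoeff (a * Q) Q d) r * (a ^ r * Q ^ r ^ 2) ^ p)
      (nestedSum Q (d + p) fun m s => (if m < p then a else a * Q) ^ s * Q ^ s ^ 2) := by
  refine .nestedSum_add hQ ha (fun m hm s => by rw [if_pos hm]) ?_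
  simpa using (isBaileyPair_chainCoeff_mul hQ ha d).lower hQ ha

lemma geomBounded_pow_mul_pow_sq (hQ : ‖Q‖ ≤ 1) (b : ℂ) :
    GeomBounded fun r => b ^ r * Q ^ r ^ 2 :=
  (geomBounded_const_pow b).mul (geomBounded_pow_comp hQ _)

lemma geomBounded_chainCoeff (hQ : ‖Q‖ < 1) (b : ℂ) (d : ℕ) : GeomBounded (chainCoeff b Q d) :=
  (geomBounded_unitCoeff hQ b).mul ((geomBounded_pow_mul_pow_sq hQ.le b).pow (d + 1))

lemma geomBounded_one_sub_mul_pow (hQ : ‖Q‖ ≤ 1) (b : ℂ) (φ : ℕ → ℕ) :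
    GeomBounded fun r => 1 - b * Q ^ φ r := by
  refine geomBounded_of_norm_le (C := 1 + ‖b‖) fun r => ?_
  refine (norm_sub_le _ _).trans (add_le_add norm_one.le ?_)
  rw [norm_mul, norm_pow]
  exact mul_le_of_le_one_right (norm_nonneg b) (pow_le_one₀ (norm_nonneg Q) hQ)

/-- The weight of the outermost summation variable. -/
noncomputable def headWeight (b q : ℂ) (s : ℕ) : ℂ := b ^ s * qPoch (-q) (q ^ 2) s * q ^ s ^ 2

/-- The sequence conjugate to `headWeight` under the Bailey transform. -/
noncomputable def headGamma (b q : ℂ) (r : ℕ) : ℂ :=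
  headWeight b q r * (qPochInf (-(b * q ^ (2 * r + 1))) (q ^ 2) / qPochInf (b * q ^ 2) (q ^ 2))

lemma phiNum_eq_headWeight (b q : ℂ) :
    phiNum (q ^ 2) (-(b * q)) (b * q ^ 2) = headWeight b q := by
  funext s
  induction s with
  | zero => simp [phiNum_zero, headWeight, qPoch_zero]
  | succ s ih =>
    rw [phiNum_succ, ih, headWeight, headWeight, qPoch_succ]
    ring

lemma hasSum_headWeight_mul_baileyKernel (hQ : ‖q ^ 2‖ < 1)
    (hb : ∀ n, qPoch (b * q ^ 2) (q ^ 2) n ≠ 0) (r : ℕ) :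
    HasSum (fun s => headWeight b q s * baileyKernel b (q ^ 2) s r) (headGamma b q r) := by
  have hshift : -(b * q) * (q ^ 2) ^ r = -(b * q ^ (2 * r + 1)) := by ring
  simpa only [phiNum_eq_headWeight, hshift] using!
    hasSum_phiNum_mul_baileyKernel hQ hb (-(b * q)) r

lemma rapidlyDecreasing_headWeight (hq : ‖q‖ < 1) (b : ℂ) :
    RapidlyDecreasing (headWeight b q) :=
  ((geomBounded_const_pow b).mul
    (geomBounded_qPoch (norm_sq_lt_one hq) (-q))).rapidlyDecreasing_mul_pow_sq hq

lemma tsum_headWeight_mul_nestedSum_const (hq : ‖q‖ < 1)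
    (ha : ∀ n, qPoch (a * q ^ 2) (q ^ 2) n ≠ 0) (d : ℕ) :
    ∑' s, headWeight (a * q ^ 2) q s *
        nestedSum (q ^ 2) d (fun _ s => (a * q ^ 2) ^ s * (q ^ 2) ^ s ^ 2) s =
      ∑' r, chainCoeff (a * q ^ 2) (q ^ 2) d r *
        ((1 - a * (q ^ 2) ^ (2 * r + 1)) / (1 - a * q ^ 2)) * headGamma (a * q ^ 2) q r := by
  have hQ := norm_sq_lt_one hq
  have haQ : ∀ n, qPoch (a * q ^ 2 * q ^ 2) (q ^ 2) n ≠ 0 := by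
    simpa using qPoch_mul_pow_ne_zero ha 1
  refine ((isBaileyPair_chainCoeff_mul (qPoch_self_ne_zero hQ) ha d).hasSum hQ haQ ?_
    (rapidlyDecreasing_headWeight hq _) (hasSum_headWeight_mul_baileyKernel hQ haQ)).tsum_eq.symm
  simpa only [div_eq_mul_inv] using (geomBounded_chainCoeff hQ _ d).mul
    ((geomBounded_one_sub_mul_pow hQ.le a _).mul (geomBounded_const _))

lemma tsum_headWeight_mul_nestedSum (hq : ‖q‖ < 1)
    (ha : ∀ n, qPoch (a * q ^ 2) (q ^ 2) n ≠ 0) (d p : ℕ) :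
    ∑' s, headWeight a q s * nestedSum (q ^ 2) (d + p)
        (fun m s => (if m < p then a else a * q ^ 2) ^ s * (q ^ 2) ^ s ^ 2) s =
      ∑' r, chainCoeff (a * q ^ 2) (q ^ 2) d r *
        ((a ^ r * (q ^ 2) ^ r ^ 2) ^ p * headGamma a q r - a * (q ^ 2) ^ (2 * r + 1) *
          ((a ^ (r + 1) * (q ^ 2) ^ (r + 1) ^ 2) ^ p * headGamma a q (r + 1))) := by
  have hQ := norm_sq_lt_one hq
  have hbounded := geomBounded_chainCoeff hQ (a * q ^ 2) d
  have hpow := (geomBounded_pow_mul_pow_sq hQ.le a).pow p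
  have hδ := rapidlyDecreasing_headWeight hq a
  have hγ := hasSum_headWeight_mul_baileyKernel hQ ha
  have hlower := (isBaileyPair_lowerAlpha_chainCoeff (qPoch_self_ne_zero hQ) ha d p).hasSum hQ ha
    ((hbounded.lowerAlpha hQ.le a).mul hpow) hδ hγ
  have hsum := (IsBaileyPair.hasSum (fun _ => rfl) hQ ha (hbounded.mul hpow) hδ hγ).summable
  simp only [mul_assoc (lowerAlpha _ _ _ _), mul_assoc (chainCoeff _ _ _ _)] at hlower hsum
  rw [← hlower.tsum_eq, tsum_lowerAlpha_mul hsum hlower.summable]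

end BaileyChain

section MultisumTerms

variable {q : ℂ}

/-- The ratio of `q`-shifted factorials in the series (1). -/
noncomputable def pochRatio (q a : ℂ) (n : ℕ) : ℂ :=
  qPoch (-q) (q ^ 2) n * qPochInf (-(a * q ^ (2 * n + 3))) (q ^ 2) /
    (qPoch (q ^ 2) (q ^ 2) n * qPochInf (a * q ^ (2 * n + 2)) (q ^ 2))

/-- The summand of the series (1). -/
noncomputable def seriesTerm (q a : ℂ) (k i n : ℕ) : ℂ :=
  (-1 : ℂ) ^ n * a ^ (k * n) * q ^ (2 * k * n ^ 2 + (2 * k - 2 * i + 1) * n) * pochRatio q a n *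
    (1 + a * q ^ (2 * n + 1) - (1 + q ^ (2 * n + 1)) * a ^ i * q ^ ((2 * i - 1) * (2 * n + 1)))

/-- The summand of the `(k - 1)`-fold sum (2). -/
noncomputable def shortTerm (q a : ℂ) (k i : ℕ) (t : ℕ → ℕ) : ℂ :=
  a ^ (∑ m ∈ range (k - 1), t m) * qPoch (-q) (q ^ 2) (t 0) *
    q ^ (t 0 ^ 2 + 2 * ∑ m ∈ Ico 1 (k - 1), t m ^ 2 + 2 * ∑ m ∈ Ico (i - 1) (k - 1), t m) /
    ∏ m ∈ range (k - 1), qPoch (q ^ 2) (q ^ 2) (t m - t (m + 1))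

/-- The summand of the `(2k - 2)`-fold sum (3). -/
noncomputable def longTerm (q a : ℂ) (k i : ℕ) (t : ℕ → ℕ) : ℂ :=
  a ^ (∑ m ∈ range (k - 1), t (2 * m)) *
    q ^ (∑ m ∈ range (2 * k - 2), t m ^ 2 + 2 * ∑ m ∈ Ico (i - 1) (k - 1), t (2 * m)) /
    ∏ m ∈ range (2 * k - 2), qPoch (q ^ 2) (q ^ 2) (t m - t (m + 1))

/-- The base `a` of the first `j` variables and `a Q` of the later ones. -/
def weightBase (a Q : ℂ) (j m : ℕ) : ℂ := if m < j then a else a * Q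

/-- The weight of the `m`-th variable in `shortTerm`, with `j = i - 1`. -/
noncomputable def shortWeight (q a : ℂ) (j : ℕ) : ℕ → ℕ → ℂ
  | 0 => headWeight (weightBase a (q ^ 2) j 0) q
  | m + 1 => fun s => weightBase a (q ^ 2) j (m + 1) ^ s * (q ^ 2) ^ s ^ 2

/-- The weight of the `m`-th variable in `longTerm`, with `j = i - 1`. -/
noncomputable def longWeight (q a : ℂ) (j m s : ℕ) : ℂ :=
  (if Even m then weightBase a (q ^ 2) j (m / 2) else 1) ^ s * q ^ s ^ 2

lemma prod_weightBase_pow (a Q : ℂ) (j n : ℕ) (t : ℕ → ℕ) :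
    ∏ m ∈ range n, weightBase a Q j m ^ t m =
      a ^ (∑ m ∈ range n, t m) * Q ^ ∑ m ∈ Ico j n, t m := by
  have hbase (m : ℕ) : weightBase a Q j m ^ t m = a ^ t m * if j ≤ m then Q ^ t m else 1 := by
    rw [weightBase]
    split_ifs
    · lia
    · rw [mul_one]
    · rw [mul_pow]
    · lia
  have hIco : {m ∈ range n | j ≤ m} = Ico j n := by
    ext m
    simp only [mem_filter, mem_range, mem_Ico, and_comm]
  simp only [hbase]
  rw [prod_mul_distrib, ← prod_filter, hIco, prod_pow_eq_pow_sum, prod_pow_eq_pow_sum]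

lemma shortTerm_eq_div (q a : ℂ) (K j : ℕ) (t : ℕ → ℕ) :
    shortTerm q a (K + 2) (j + 1) t = (∏ m ∈ range (K + 1), shortWeight q a j m (t m)) /
      ∏ m ∈ range (K + 1), qPoch (q ^ 2) (q ^ 2) (t m - t (m + 1)) := by
  have hprod : ∏ m ∈ range (K + 1), shortWeight q a j m (t m) =
      (∏ m ∈ range (K + 1), weightBase a (q ^ 2) j m ^ t m) *
        (qPoch (-q) (q ^ 2) (t 0) * q ^ t 0 ^ 2 * ∏ m ∈ range K, (q ^ 2) ^ t (m + 1) ^ 2) := by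
    rw [prod_range_succ', prod_range_succ' (fun m => weightBase a (q ^ 2) j m ^ t m)]
    simp only [shortWeight, headWeight, prod_mul_distrib]
    ring
  have hIco : ∑ m ∈ Ico 1 (K + 1), t m ^ 2 = ∑ m ∈ range K, t (m + 1) ^ 2 := by
    simp only [sum_Ico_eq_sum_range, Nat.add_sub_cancel, add_comm 1]
  rw [hprod, prod_weightBase_pow, prod_pow_eq_pow_sum, shortTerm,
    show K + 2 - 1 = K + 1 from rfl, Nat.add_sub_cancel, hIco]
  ring

lemma prod_range_two_mul (f : ℕ → ℂ) (n : ℕ) :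
    ∏ m ∈ range (2 * n), f m = ∏ m ∈ range n, f (2 * m) * f (2 * m + 1) := by
  induction n with
  | zero => rfl
  | succ n ih =>
    rw [Nat.mul_add_one, prod_range_succ, prod_range_succ, ih, prod_range_succ, mul_assoc]

lemma longTerm_eq_div (q a : ℂ) (K j : ℕ) (t : ℕ → ℕ) :
    longTerm q a (K + 2) (j + 1) t = (∏ m ∈ range (2 * K + 2), longWeight q a j m (t m)) /
      ∏ m ∈ range (2 * K + 2), qPoch (q ^ 2) (q ^ 2) (t m - t (m + 1)) := by
  have hbase : ∏ m ∈ range (2 * (K + 1)),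
      (if Even m then weightBase a (q ^ 2) j (m / 2) else 1) ^ t m =
        ∏ m ∈ range (K + 1), weightBase a (q ^ 2) j m ^ t (2 * m) := by
    rw [prod_range_two_mul]
    refine prod_congr rfl fun m _ => ?_
    simp
  simp only [longWeight, prod_mul_distrib]
  rw [show 2 * K + 2 = 2 * (K + 1) from rfl, hbase,
    prod_weightBase_pow a (q ^ 2) j (K + 1) fun m => t (2 * m), prod_pow_eq_pow_sum, longTerm,
    show K + 2 - 1 = K + 1 from rfl, show 2 * (K + 2) - 2 = 2 * (K + 1) from rfl,
    Nat.add_sub_cancel]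
  ring

lemma summable_norm_shortWeight (hq : ‖q‖ < 1) (a : ℂ) (j m : ℕ) :
    Summable fun s => ‖shortWeight q a j m s‖ := by
  cases m with
  | zero => exact (rapidlyDecreasing_headWeight hq _).summable_norm
  | succ m =>
    exact ((geomBounded_const_pow _).rapidlyDecreasing_mul_pow_sq
      (norm_sq_lt_one hq)).summable_norm

lemma summable_norm_longWeight (hq : ‖q‖ < 1) (a : ℂ) (j m : ℕ) :
    Summable fun s => ‖longWeight q a j m s‖ :=
  ((geomBounded_const_pow _).rapidlyDecreasing_mul_pow_sq hq).summable_norm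

theorem tsum_shortTerm (hq : ‖q‖ < 1) (a : ℂ) (K j : ℕ) :
    ∑' s : {s : Fin (K + 1) → ℕ // Antitone s},
        shortTerm q a (K + 2) (j + 1) (extendZero s.1) =
      ∑' s, shortWeight q a j 0 s *
        nestedSum (q ^ 2) K (fun m => shortWeight q a j (m + 1)) s := by
  simp only [shortTerm_eq_div]
  exact tsum_antitone_eq_tsum_mul_nestedSum (norm_sq_lt_one hq) _ (summable_norm_shortWeight hq a j)

theorem tsum_longTerm (hq : ‖q‖ < 1) (a : ℂ) (K j : ℕ) :
    ∑' s : {s : Fin (2 * K + 2) → ℕ // Antitone s},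
        longTerm q a (K + 2) (j + 1) (extendZero s.1) =
      ∑' s, longWeight q a j 0 s *
        nestedSum (q ^ 2) (2 * K + 1) (fun m => longWeight q a j (m + 1)) s := by
  simp only [longTerm_eq_div]
  exact tsum_antitone_eq_tsum_mul_nestedSum (norm_sq_lt_one hq) _ (summable_norm_longWeight hq a j)

theorem tsum_shortTerm_eq_tsum_longTerm (hq : ‖q‖ < 1) (a : ℂ) (K j : ℕ) :
    ∑' s : {s : Fin (K + 1) → ℕ // Antitone s},
        shortTerm q a (K + 2) (j + 1) (extendZero s.1) =
      ∑' s : {s : Fin (2 * K + 2) → ℕ // Antitone s},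
        longTerm q a (K + 2) (j + 1) (extendZero s.1) := by
  have hodd (m s : ℕ) : longWeight q a j (2 * m + 1) s = q ^ s ^ 2 := by
    simp [longWeight]
  have heven (m s : ℕ) :
      longWeight q a j (2 * m + 1 + 1) s * q ^ s ^ 2 = shortWeight q a j (m + 1) s := by
    rw [longWeight, if_pos ⟨m + 1, by ring⟩, show (2 * m + 1 + 1) / 2 = m + 1 by lia, shortWeight]
    ring
  rw [tsum_shortTerm hq, tsum_longTerm hq,
    nestedSum_two_mul_add_one (qPoch_self_ne_zero (norm_sq_lt_one hq)) K hodd]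
  refine tsum_congr fun s => ?_
  simp only [heven]
  simp only [longWeight, shortWeight, headWeight, Nat.zero_div, Even.zero, if_true]
  ring

end MultisumTerms

section SeriesTerm

variable {a q : ℂ}

lemma qPoch_div_mul_headGamma (hQ : ‖q ^ 2‖ < 1)
    (ha : ∀ n, qPoch (a * q ^ 2) (q ^ 2) n ≠ 0) (n : ℕ) :
    qPoch (a * q ^ 2) (q ^ 2) n / qPoch (q ^ 2) (q ^ 2) n * headGamma a q n =
      a ^ n * q ^ n ^ 2 * (1 + a * q ^ (2 * n + 1)) * pochRatio q a n := by
  have han := ha n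
  have hden := qPochInf_eq_qPoch_mul hQ (a * q ^ 2) n
  have hnum := qPochInf_eq_qPoch_mul hQ (-(a * q ^ (2 * n + 1))) 1
  rw [show a * q ^ 2 * (q ^ 2) ^ n = a * q ^ (2 * n + 2) by ring] at hden
  rw [qPoch_one, show -(a * q ^ (2 * n + 1)) * (q ^ 2) ^ 1 = -(a * q ^ (2 * n + 3)) by ring] at hnum
  rw [headGamma, headWeight, pochRatio, hden, hnum]
  field_simp
  ring

lemma qPoch_div_mul_headGamma_succ (hQ : ‖q ^ 2‖ < 1)
    (ha : ∀ n, qPoch (a * q ^ 2) (q ^ 2) n ≠ 0) (n : ℕ) :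
    qPoch (a * q ^ 2) (q ^ 2) n / qPoch (q ^ 2) (q ^ 2) n * headGamma a q (n + 1) =
      a ^ (n + 1) * q ^ (n + 1) ^ 2 * (1 + q ^ (2 * n + 1)) * pochRatio q a n := by
  have han := ha n
  have hden := qPochInf_eq_qPoch_mul hQ (a * q ^ 2) n
  rw [show a * q ^ 2 * (q ^ 2) ^ n = a * q ^ (2 * n + 2) by ring] at hden
  rw [headGamma, headWeight, pochRatio, hden, qPoch_succ, show 2 * (n + 1) + 1 = 2 * n + 3 by ring]
  field_simp
  ring

lemma qPoch_div_mul_headGamma_shift (hQ : ‖q ^ 2‖ < 1)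
    (ha : ∀ n, qPoch (a * q ^ 2) (q ^ 2) n ≠ 0) (n : ℕ) :
    qPoch (a * q ^ 2) (q ^ 2) n / qPoch (q ^ 2) (q ^ 2) n *
        (headGamma (a * q ^ 2) q n / (1 - a * q ^ 2)) =
      (a * q ^ 2) ^ n * q ^ n ^ 2 * pochRatio q a n := by
  have han := ha n
  have hden := qPochInf_eq_qPoch_mul hQ (a * q ^ 2) n
  rw [qPochInf_eq_qPoch_mul hQ (a * q ^ 2) 1, qPoch_one, pow_one,
    show a * q ^ 2 * (q ^ 2) ^ n = a * q ^ (2 * n + 2) by ring] at hden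
  rw [headGamma, mul_div_assoc, div_div, mul_comm _ (1 - a * q ^ 2), hden, headWeight, pochRatio,
    show -(a * q ^ 2 * q ^ (2 * n + 1)) = -(a * q ^ (2 * n + 3)) by ring]
  field_simp

lemma seriesTerm_one (hQ : ‖q ^ 2‖ < 1) (ha : ∀ n, qPoch (a * q ^ 2) (q ^ 2) n ≠ 0)
    (d n : ℕ) :
    seriesTerm q a (d + 2) 1 n = chainCoeff (a * q ^ 2) (q ^ 2) d n *
      ((1 - a * (q ^ 2) ^ (2 * n + 1)) / (1 - a * q ^ 2)) * headGamma (a * q ^ 2) q n := by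
  have hγ := qPoch_div_mul_headGamma_shift hQ ha n
  have hexp : 2 * (d + 2) * n ^ 2 + (2 * (d + 2) - 2 * 1 + 1) * n =
      2 * n.choose 2 + 2 * (d + 1) * n ^ 2 + 2 * (d + 1) * n + 2 * n + n ^ 2 := by
    rw [show 2 * (d + 2) - 2 * 1 + 1 = 2 * d + 3 by lia]
    linear_combination sq_eq_two_mul_choose_add n
  rw [seriesTerm, hexp, chainCoeff, unitCoeff]
  linear_combination -((-1) ^ n * (q ^ 2) ^ n.choose 2 *
    ((a * q ^ 2) ^ n * (q ^ 2) ^ n ^ 2) ^ (d + 1) * (1 - a * (q ^ 2) ^ (2 * n + 1))) * hγ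

lemma seriesTerm_add_two (hQ : ‖q ^ 2‖ < 1) (ha : ∀ n, qPoch (a * q ^ 2) (q ^ 2) n ≠ 0)
    (d p n : ℕ) :
    seriesTerm q a (d + p + 2) (p + 2) n = chainCoeff (a * q ^ 2) (q ^ 2) d n *
      ((a ^ n * (q ^ 2) ^ n ^ 2) ^ p * headGamma a q n - a * (q ^ 2) ^ (2 * n + 1) *
        ((a ^ (n + 1) * (q ^ 2) ^ (n + 1) ^ 2) ^ p * headGamma a q (n + 1))) := by
  have hγ := qPoch_div_mul_headGamma hQ ha n
  have hγ' := qPoch_div_mul_headGamma_succ hQ ha n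
  have hexp : 2 * (d + p + 2) * n ^ 2 + (2 * (d + p + 2) - 2 * (p + 2) + 1) * n =
      2 * n.choose 2 + 2 * (d + 1) * n ^ 2 + 2 * (d + 1) * n + 2 * p * n ^ 2 + n ^ 2 := by
    rw [show 2 * (d + p + 2) - 2 * (p + 2) + 1 = 2 * d + 1 by lia]
    linear_combination sq_eq_two_mul_choose_add n
  rw [seriesTerm, hexp, show 2 * (p + 2) - 1 = 2 * p + 3 by lia, chainCoeff, unitCoeff]
  linear_combination -((-1) ^ n * (q ^ 2) ^ n.choose 2 *
    ((a * q ^ 2) ^ n * (q ^ 2) ^ n ^ 2) ^ (d + 1)) * ((a ^ n * (q ^ 2) ^ n ^ 2) ^ p * hγ -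
      a * (q ^ 2) ^ (2 * n + 1) * (a ^ (n + 1) * (q ^ 2) ^ (n + 1) ^ 2) ^ p * hγ')

theorem tsum_seriesTerm_eq_tsum_shortTerm (hq : ‖q‖ < 1)
    (ha : ∀ n, qPoch (a * q ^ 2) (q ^ 2) n ≠ 0) {K j : ℕ} (hj : j ≤ K + 1) :
    ∑' n, seriesTerm q a (K + 2) (j + 1) n =
      ∑' s : {s : Fin (K + 1) → ℕ // Antitone s},
        shortTerm q a (K + 2) (j + 1) (extendZero s.1) := by
  have hQ := norm_sq_lt_one hq
  rw [tsum_shortTerm hq]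
  cases j with
  | zero =>
    simp only [zero_add, seriesTerm_one hQ ha, shortWeight, weightBase, Nat.not_lt_zero, if_false]
    exact (tsum_headWeight_mul_nestedSum_const hq ha K).symm
  | succ p =>
    obtain ⟨d, rfl⟩ := Nat.exists_eq_add_of_le' (Nat.le_of_succ_le_succ hj)
    simp only [add_assoc p 1 1, seriesTerm_add_two hQ ha, shortWeight,
      weightBase, Nat.succ_pos, Nat.add_lt_add_iff_right, if_true]
    exact (tsum_headWeight_mul_nestedSum hq ha d p).symm

lemma qPoch_mul_sq_ne_zero (ha : ∀ m : ℕ, 1 ≤ m → a * q ^ (2 * m) ≠ 1) (n : ℕ) :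
    qPoch (a * q ^ 2) (q ^ 2) n ≠ 0 := by
  refine prod_ne_zero_iff.2 fun j _ => sub_ne_zero.2 (Ne.symm ?_)
  rw [mul_assoc, ← pow_succ', ← pow_mul]
  exact ha (j + 1) j.succ_pos

end SeriesTerm

/-- Theorem 5.1 (with `q` replaced by `q²`).  In the second sum the tuple encodes
`s_1 ≥ ⋯ ≥ s_{k-1} ≥ 0` via `s_m = t (m-1)` (with `s_k = 0`), and in the third sum
`s_1 ≥ ⋯ ≥ s_{2k-2} ≥ 0` via `s_m = t (m-1)` (with `s_{2k-1} = 0`). -/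
theorem theorem_5_1 (q a : ℂ) (h0 : 0 < ‖q‖) (h1 : ‖q‖ < 1)
    (ha : ∀ m : ℕ, 1 ≤ m → a * q ^ (2 * m) ≠ 1)
    (k i : ℕ) (hk : 2 ≤ k) (hi1 : 1 ≤ i) (hik : i ≤ k) :
    (∑' n : ℕ, (-1 : ℂ) ^ n * a ^ (k * n) * q ^ (2 * k * n ^ 2 + (2 * k - 2 * i + 1) * n) *
        (qPoch (-q) (q ^ 2) n * qPochInf (-(a * q ^ (2 * n + 3))) (q ^ 2) /
          (qPoch (q ^ 2) (q ^ 2) n * qPochInf (a * q ^ (2 * n + 2)) (q ^ 2))) *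
        (1 + a * q ^ (2 * n + 1) -
          (1 + q ^ (2 * n + 1)) * a ^ i * q ^ ((2 * i - 1) * (2 * n + 1)))) =
      (∑' s : {s : Fin (k - 1) → ℕ // Antitone s},
        (let t : ℕ → ℕ := fun m => if h : m < k - 1 then s.1 ⟨m, h⟩ else 0
         a ^ (∑ m ∈ Finset.range (k - 1), t m) * qPoch (-q) (q ^ 2) (t 0) *
           q ^ ((t 0) ^ 2 + 2 * ∑ m ∈ Finset.Ico 1 (k - 1), (t m) ^ 2 +
                2 * ∑ m ∈ Finset.Ico (i - 1) (k - 1), t m) /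
           ∏ m ∈ Finset.range (k - 1), qPoch (q ^ 2) (q ^ 2) (t m - t (m + 1)))) ∧
    (∑' s : {s : Fin (k - 1) → ℕ // Antitone s},
        (let t : ℕ → ℕ := fun m => if h : m < k - 1 then s.1 ⟨m, h⟩ else 0
         a ^ (∑ m ∈ Finset.range (k - 1), t m) * qPoch (-q) (q ^ 2) (t 0) *
           q ^ ((t 0) ^ 2 + 2 * ∑ m ∈ Finset.Ico 1 (k - 1), (t m) ^ 2 +
                2 * ∑ m ∈ Finset.Ico (i - 1) (k - 1), t m) /
           ∏ m ∈ Finset.range (k - 1), qPoch (q ^ 2) (q ^ 2) (t m - t (m + 1)))) =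
      (∑' s : {s : Fin (2 * k - 2) → ℕ // Antitone s},
        (let t : ℕ → ℕ := fun m => if h : m < 2 * k - 2 then s.1 ⟨m, h⟩ else 0
         a ^ (∑ m ∈ Finset.range (k - 1), t (2 * m)) *
           q ^ (∑ m ∈ Finset.range (2 * k - 2), (t m) ^ 2 +
                2 * ∑ m ∈ Finset.Ico (i - 1) (k - 1), t (2 * m)) /
           ∏ m ∈ Finset.range (2 * k - 2), qPoch (q ^ 2) (q ^ 2) (t m - t (m + 1)))) := by
  obtain ⟨K, rfl⟩ := Nat.exists_eq_add_of_le' hk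
  obtain ⟨j, rfl⟩ := Nat.exists_eq_add_of_le' hi1
  exact ⟨tsum_seriesTerm_eq_tsum_shortTerm h1 (qPoch_mul_sq_ne_zero ha)
      (Nat.le_of_succ_le_succ hik),
    tsum_shortTerm_eq_tsum_longTerm h1 a K j⟩
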